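/- Let (X_n) be a reversible nearest-neighbour random walk in periodic environment on Z^d with p_x(e) > 0 for all x and all unit vectors e, with potential u and average negative gradient g, and suppose the induced chain ξ on T is aperiodic (it is automatically irreducible), with drift ν := Σ_{x∈T} π(x) Σ_{y∈Z^d} p_x(y) y. Then u(X_n)/n → −⟨g, ν⟩ almost surely as n → ∞; in particular, if g ≠ 0 then u(X_n) → −∞ almost surely: the potential decreases asymptotically along the trajectory. -/

import Mathlib

open MeasureTheory Filter Topology ProbabilityTheory

noncomputable section

/-- The torus `T = ℤ^d / (M₁ℤ × ⋯ × M_dℤ)`. -/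
abbrev Torus (d : ℕ) (Md : Fin d → ℕ) : Type := ∀ i : Fin d, ZMod (Md i)

/-- Projection of `ℤ^d` onto the torus, `x ↦ x mod M`. -/
def projT {d : ℕ} (Md : Fin d → ℕ) (x : Fin d → ℤ) : Torus d Md :=
  fun i => (x i : ZMod (Md i))

/-- A canonical representative in `ℤ^d` of a point of the torus. -/
def repT {d : ℕ} (Md : Fin d → ℕ) [∀ i, NeZero (Md i)] (t : Torus d Md) : Fin d → ℤ :=
  fun i => ((t i).val : ℤ)

/-- `p` is a periodic environment on `ℤ^d`: each `p x` is a probability distribution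
on `ℤ^d` (the jump distribution at `x`), and `x ↦ p x` is `M`-periodic. -/
def IsPeriodicEnv {d : ℕ} (Md : Fin d → ℕ) (p : (Fin d → ℤ) → (Fin d → ℤ) → ℝ) : Prop :=
  (∀ x y, 0 ≤ p x y) ∧ (∀ x, HasSum (p x) 1) ∧
    ∀ (x y : Fin d → ℤ) (i : Fin d), p (x + Pi.single i (Md i : ℤ)) y = p x y

/-- The transition matrix of the induced Markov chain on the torus:
`P a b = ∑_{z : ℤ^d, a + z ∼ b} p_a(z)` (the jump `z` leads from the class `a`
to the class `b` iff `a + (z mod M) = b`). -/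
def indMatrix {d : ℕ} (Md : Fin d → ℕ) [∀ i, NeZero (Md i)]
    (p : (Fin d → ℤ) → (Fin d → ℤ) → ℝ) : Matrix (Torus d Md) (Torus d Md) ℝ :=
  Matrix.of fun a b => ∑' z : Fin d → ℤ, if a + projT Md z = b then p (repT Md a) z else 0

/-- Irreducibility of a finite-state transition matrix: every state can be reached
from every state with positive probability in finitely many (positively many) steps. -/
def MatIrreducible {T : Type*} [Fintype T] [DecidableEq T] (P : Matrix T T ℝ) : Prop :=
  ∀ a b : T, ∃ n : ℕ, 0 < n ∧ 0 < (P ^ n) a b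

/-- Aperiodicity of a finite-state transition matrix: for every state, the gcd of
the possible return times is `1`. -/
def MatAperiodic {T : Type*} [Fintype T] [DecidableEq T] (P : Matrix T T ℝ) : Prop :=
  ∀ a : T, ∀ m : ℕ, (∀ n : ℕ, 0 < n → 0 < (P ^ n) a a → m ∣ n) → m = 1

/-- `π` is a stationary probability distribution for the transition matrix `P`. -/
def IsStationaryDist {T : Type*} [Fintype T] (P : Matrix T T ℝ) (π : T → ℝ) : Prop :=
  (∀ a, 0 ≤ π a) ∧ (∑ a, π a = 1) ∧ ∀ b, ∑ a, π a * P a b = π b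

/-- The drift vector `ν = ∑_{x ∈ T} π(x) ∑_{y ∈ ℤ^d} p_x(y) y`. -/
def driftVec {d : ℕ} (Md : Fin d → ℕ) [∀ i, NeZero (Md i)]
    (p : (Fin d → ℤ) → (Fin d → ℤ) → ℝ) (π : Torus d Md → ℝ) : Fin d → ℝ :=
  fun i => ∑ a : Torus d Md, π a * ∑' y : Fin d → ℤ, p (repT Md a) y * (y i : ℝ)

/-- `μ` is the law of the random walk in the environment `p` started at `x₀`,
as a probability measure on trajectory space: the probability of every cylinder set
is the corresponding product of one-step transition probabilities. -/
def IsRWPELaw {d : ℕ} (p : (Fin d → ℤ) → (Fin d → ℤ) → ℝ) (x₀ : Fin d → ℤ)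
    (μ : Measure (ℕ → (Fin d → ℤ))) : Prop :=
  IsProbabilityMeasure μ ∧
    ∀ (n : ℕ) (x : ℕ → (Fin d → ℤ)),
      μ {ω | ∀ i ≤ n, ω i = x i} =
        ENNReal.ofReal ((if x 0 = x₀ then (1 : ℝ) else 0) *
          ∏ i ∈ Finset.range n, p (x i) (x (i + 1) - x i))

/-- `e` is one of the `2d` unit vectors of `ℤ^d`. -/
def IsUnitVec {d : ℕ} (e : Fin d → ℤ) : Prop :=
  ∃ i : Fin d, e = Pi.single i 1 ∨ e = -Pi.single i 1

/-- The environment is nearest neighbour: only jumps to nearest neighbours have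
positive probability. -/
def IsNearestNeighbour {d : ℕ} (p : (Fin d → ℤ) → (Fin d → ℤ) → ℝ) : Prop :=
  ∀ x y, p x y ≠ 0 → IsUnitVec y

/-- The average negative gradient `g` of the potential,
`g_i = (1/M_i) ∑_{j=0}^{M_i - 1} log (p_{j eᵢ}(eᵢ) / p_{(j+1) eᵢ}(-eᵢ))`. -/
def avgNegGrad {d : ℕ} (Md : Fin d → ℕ) (p : (Fin d → ℤ) → (Fin d → ℤ) → ℝ) :
    Fin d → ℝ :=
  fun i => (Md i : ℝ)⁻¹ * ∑ j ∈ Finset.range (Md i),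
    Real.log (p (Pi.single i (j : ℤ)) (Pi.single i 1) /
      p (Pi.single i ((j : ℤ) + 1)) (-Pi.single i 1))

/-- The conditional expected jump `μ_{xy}` of the walk, given that the induced chain
jumps from `x` to `y`. -/
def condJump {d : ℕ} (Md : Fin d → ℕ) [∀ i, NeZero (Md i)]
    (p : (Fin d → ℤ) → (Fin d → ℤ) → ℝ) (a b : Torus d Md) : Fin d → ℝ :=
  if indMatrix Md p a b = 0 then 0
  else fun i =>
    (∑' z : Fin d → ℤ, if a + projT Md z = b then p (repT Md a) z * (z i : ℝ) else 0) /
      indMatrix Md p a b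

section Abstract

variable {T κ : Type*} [Fintype T] [Fintype κ]

theorem aux_harmonic_const (q : T → κ → ℝ) (τ : T → κ → T)
    (hq : ∀ a k, 0 < q a k) (hq1 : ∀ a, ∑ k, q a k = 1)
    (hconn : ∀ s : Set T, s.Nonempty → (∀ a ∈ s, ∀ k, τ a k ∈ s) → s = Set.univ)
    (f : T → ℝ) (hf : ∀ a, f a = ∑ k, q a k * f (τ a k)) (a b : T) : f a = f b := by
  have : Nonempty T := ⟨a⟩
  obtain ⟨m, hm⟩ := Finite.exists_max f
  have hs := hconn {x | f x = f m} ⟨m, rfl⟩ (by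
    intro x hx k
    have hx' : f x = f m := hx
    have h0 : ∑ k, q x k * (f m - f (τ x k)) = 0 := by
      simp only [mul_sub, Finset.sum_sub_distrib, ← Finset.sum_mul, hq1, ← hf x, hx']
      ring
    have h1 := (Finset.sum_eq_zero_iff_of_nonneg (fun k _ =>
      mul_nonneg (hq x k).le (sub_nonneg.2 (hm (τ x k))))).1 h0 k (Finset.mem_univ k)
    have h2 := (mul_eq_zero.1 h1).resolve_left (hq x k).ne'
    show f (τ x k) = f m
    linarith)
  have ha : a ∈ {x | f x = f m} := hs ▸ Set.mem_univ a
  have hb : b ∈ {x | f x = f m} := hs ▸ Set.mem_univ b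
  exact Eq.trans ha (Eq.symm hb)

theorem aux_pi_pos (q : T → κ → ℝ) (τ : T → κ → T)
    (hq : ∀ a k, 0 < q a k)
    (hconn : ∀ s : Set T, s.Nonempty → (∀ a ∈ s, ∀ k, τ a k ∈ s) → s = Set.univ)
    (π : T → ℝ) (hπ0 : ∀ a, 0 ≤ π a) (hπ1 : ∑ a, π a = 1)
    (hst : ∀ f : T → ℝ, ∑ a, π a * ∑ k, q a k * f (τ a k) = ∑ a, π a * f a) (a : T) :
    0 < π a := by
  classical
  have hs := hconn {x | 0 < π x} (by
    by_contra h
    rw [Set.not_nonempty_iff_eq_empty] at h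
    have : ∀ x, π x = 0 := fun x => by
      have : x ∉ {x | 0 < π x} := by rw [h]; simp
      exact le_antisymm (not_lt.1 this) (hπ0 x)
    simp [this] at hπ1) (by
    intro x hx k
    have h := hst (fun b => if b = τ x k then 1 else 0)
    simp only [mul_ite, mul_one, mul_zero, Finset.sum_ite_eq', Finset.mem_univ, if_true] at h
    show 0 < π (τ x k)
    rw [← h]
    have hx' : 0 < π x := hx
    have h1 : q x k ≤ ∑ j, (if τ x j = τ x k then q x j else 0) := by
      have := Finset.single_le_sum (f := fun j => if τ x j = τ x k then q x j else 0)
        (fun j _ => by split_ifs; exacts [(hq x j).le, le_rfl]) (Finset.mem_univ k)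
      simpa using this
    have h2 := Finset.single_le_sum
      (f := fun y => π y * ∑ j, (if τ y j = τ x k then q y j else 0))
      (fun y _ => mul_nonneg (hπ0 y) (Finset.sum_nonneg fun j _ => by
        split_ifs; exacts [(hq y j).le, le_rfl])) (Finset.mem_univ x)
    refine lt_of_lt_of_le ?_ h2
    exact mul_pos hx' ((hq x k).trans_le h1))
  have : a ∈ {x | 0 < π x} := hs ▸ Set.mem_univ a
  exact this

theorem aux_poisson (q : T → κ → ℝ) (τ : T → κ → T)
    (hq : ∀ a k, 0 < q a k) (hq1 : ∀ a, ∑ k, q a k = 1)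
    (hconn : ∀ s : Set T, s.Nonempty → (∀ a ∈ s, ∀ k, τ a k ∈ s) → s = Set.univ)
    (π : T → ℝ) (hπ1 : ∑ a, π a = 1)
    (hst : ∀ f : T → ℝ, ∑ a, π a * ∑ k, q a k * f (τ a k) = ∑ a, π a * f a)
    (h : T → ℝ) :
    ∃ φ : T → ℝ, ∀ a, φ a - ∑ k, q a k * φ (τ a k) = h a - ∑ b, π b * h b := by
  classical
  let L : (T → ℝ) →ₗ[ℝ] (T → ℝ) :=
    { toFun := fun f a => f a - ∑ k, q a k * f (τ a k)
      map_add' := fun f g => by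
        ext a; simp only [Pi.add_apply, mul_add, Finset.sum_add_distrib]; ring
      map_smul' := fun c f => by
        ext a
        simp only [Pi.smul_apply, smul_eq_mul, RingHom.id_apply, mul_sub, Finset.mul_sum]
        congr 1
        exact Finset.sum_congr rfl fun k _ => by ring }
  let Λ : (T → ℝ) →ₗ[ℝ] ℝ :=
    { toFun := fun f => ∑ a, π a * f a
      map_add' := fun f g => by simp only [Pi.add_apply, mul_add, Finset.sum_add_distrib]
      map_smul' := fun c f => by
        simp only [Pi.smul_apply, smul_eq_mul, RingHom.id_apply, Finset.mul_sum]
        exact Finset.sum_congr rfl fun k _ => by ring }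
  have hL : ∀ f a, L f a = f a - ∑ k, q a k * f (τ a k) := fun _ _ => rfl
  have hΛ : ∀ f, Λ f = ∑ a, π a * f a := fun _ => rfl
  have hle : LinearMap.range L ≤ LinearMap.ker Λ := by
    rintro _ ⟨f, rfl⟩
    rw [LinearMap.mem_ker, hΛ]
    simp only [hL, mul_sub, Finset.sum_sub_distrib, hst, sub_self]
  have hker : LinearMap.ker L ≤ Submodule.span ℝ {(fun _ => 1 : T → ℝ)} := by
    intro f hf
    rw [LinearMap.mem_ker] at hf
    have hh : ∀ a, f a = ∑ k, q a k * f (τ a k) := fun a => by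
      have := congrFun hf a
      rw [hL] at this
      simpa [sub_eq_zero] using this
    have hc := aux_harmonic_const q τ hq hq1 hconn f hh
    rw [Submodule.mem_span_singleton]
    rcases isEmpty_or_nonempty T with hT | ⟨⟨t⟩⟩
    · exact ⟨0, Subsingleton.elim _ _⟩
    · exact ⟨f t, by ext a; simp [hc a t]⟩
  have hk1 : Module.finrank ℝ (LinearMap.ker L) ≤ 1 :=
    (Submodule.finrank_mono hker).trans
      (by simpa using finrank_span_le_card (R := ℝ) ({(fun _ => 1 : T → ℝ)} : Set (T → ℝ)))
  have hsurj : LinearMap.range Λ = ⊤ := by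
    rw [LinearMap.range_eq_top]
    intro c
    refine ⟨fun _ => c, ?_⟩
    rw [hΛ, ← Finset.sum_mul, hπ1, one_mul]
  have e1 := LinearMap.finrank_range_add_finrank_ker L
  have e2 := LinearMap.finrank_range_add_finrank_ker Λ
  rw [hsurj, finrank_top, Module.finrank_self] at e2
  have heq := Submodule.eq_of_le_of_finrank_le hle (by omega)
  have hmem : (fun a => h a - ∑ b, π b * h b) ∈ LinearMap.ker Λ := by
    rw [LinearMap.mem_ker, hΛ]
    simp only [mul_sub, Finset.sum_sub_distrib, ← Finset.sum_mul, hπ1, one_mul, sub_self]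
  rw [← heq] at hmem
  obtain ⟨φ, hφ⟩ := hmem
  exact ⟨φ, fun a => by rw [← hL, hφ]⟩

/-- Positivity of entropy production. -/
theorem aux_entropy (q : T → κ → ℝ) (τ : T → κ → T)
    (hq : ∀ a k, 0 < q a k) (bar : κ → κ) (hbar : ∀ k, bar (bar k) = k)
    (hτ : ∀ a k, τ (τ a k) (bar k) = a)
    (π : T → ℝ) (hπ : ∀ a, 0 < π a)
    (hst : ∀ f : T → ℝ, ∑ a, π a * ∑ k, q a k * f (τ a k) = ∑ a, π a * f a)
    (hq1 : ∀ a, ∑ k, q a k = 1)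
    (hle : ∑ a, π a * ∑ k, q a k * Real.log (q a k / q (τ a k) (bar k)) ≤ 0) (a : T) (k : κ) :
    Real.log (q a k / q (τ a k) (bar k)) = Real.log (π (τ a k)) - Real.log (π a) := by
  classical
  let A : T × κ → ℝ := fun z => π z.1 * q z.1 z.2
  let σ : T × κ → T × κ := fun z => (τ z.1 z.2, bar z.2)
  have hσ : Function.Involutive σ := fun z => by
    ext <;> simp [σ, hτ, hbar]
  have hA : ∀ z, 0 < A z := fun z => mul_pos (hπ _) (hq _ _)
  have hlog : ∀ z, Real.log (A z / A (σ z)) =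
      Real.log (q z.1 z.2 / q (τ z.1 z.2) (bar z.2)) +
        (Real.log (π z.1) - Real.log (π (τ z.1 z.2))) := fun z => by
    simp only [A, σ]
    rw [Real.log_div (mul_pos (hπ _) (hq _ _)).ne' (mul_pos (hπ _) (hq _ _)).ne',
      Real.log_mul (hπ _).ne' (hq _ _).ne', Real.log_mul (hπ _).ne' (hq _ _).ne',
      Real.log_div (hq _ _).ne' (hq _ _).ne']
    ring
  have hsumσ : ∑ z, A (σ z) = ∑ z, A z := Equiv.sum_comp hσ.toPerm A
  have h0 : ∑ a, π a * ∑ k, q a k * (Real.log (π a) - Real.log (π (τ a k))) = 0 := by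
    have := hst (fun a => Real.log (π a))
    simp only [mul_sub, Finset.sum_sub_distrib, this, ← Finset.sum_mul, hq1, one_mul, sub_self]
  have hS : ∑ z, A z * Real.log (A z / A (σ z)) ≤ 0 := by
    calc _ = ∑ a, ∑ k, π a * (q a k * (Real.log (q a k / q (τ a k) (bar k)) +
            (Real.log (π a) - Real.log (π (τ a k))))) := by
          rw [Fintype.sum_prod_type]
          refine Finset.sum_congr rfl fun a _ => Finset.sum_congr rfl fun k _ => ?_
          rw [hlog]; simp only [A]; ring
      _ = ∑ a, π a * ∑ k, q a k * Real.log (q a k / q (τ a k) (bar k)) +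
          ∑ a, π a * ∑ k, q a k * (Real.log (π a) - Real.log (π (τ a k))) := by
          rw [← Finset.sum_add_distrib]
          refine Finset.sum_congr rfl fun a _ => ?_
          rw [← mul_add, ← Finset.sum_add_distrib, Finset.mul_sum]
          refine Finset.sum_congr rfl fun k _ => ?_
          ring
      _ ≤ 0 := by rw [h0, add_zero]; exact hle
  have hterm : ∀ z, A z - A (σ z) ≤ A z * Real.log (A z / A (σ z)) := fun z => by
    have h1 := Real.log_le_sub_one_of_pos (div_pos (hA (σ z)) (hA z))
    have h2 : Real.log (A z / A (σ z)) = - Real.log (A (σ z) / A z) := by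
      rw [← Real.log_inv, inv_div]
    rw [h2]
    have h3 := mul_le_mul_of_nonneg_left h1 (hA z).le
    have h4 : A z * (A (σ z) / A z - 1) = A (σ z) - A z := by
      field_simp [(hA z).ne']
    linarith
  have hz : ∑ z, (A z * Real.log (A z / A (σ z)) - (A z - A (σ z))) = 0 := by
    apply le_antisymm
    · rw [Finset.sum_sub_distrib, Finset.sum_sub_distrib, hsumσ]; linarith
    · exact Finset.sum_nonneg fun z _ => sub_nonneg.2 (hterm z)
  have hz1 := (Finset.sum_eq_zero_iff_of_nonneg (fun z _ => sub_nonneg.2 (hterm z))).1 hz (a, k)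
    (Finset.mem_univ _)
  have hAA : A (σ (a, k)) / A (a, k) = 1 := by
    by_contra hne
    have h1 := Real.log_lt_sub_one_of_pos (div_pos (hA (σ (a, k))) (hA (a, k))) hne
    have h2 : Real.log (A (a, k) / A (σ (a, k))) = - Real.log (A (σ (a, k)) / A (a, k)) := by
      rw [← Real.log_inv, inv_div]
    have h3 := mul_lt_mul_of_pos_left h1 (hA (a, k))
    have h4 : A (a, k) * (A (σ (a, k)) / A (a, k) - 1) = A (σ (a, k)) - A (a, k) := by
      field_simp [(hA (a, k)).ne']
    rw [h2] at hz1
    linarith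
  have h5 := hlog (a, k)
  rw [← inv_div, hAA, inv_one, Real.log_one] at h5
  simp only at h5
  linarith

end Abstract

/-- Interpolation along squares. -/
theorem aux_interp (S : ℕ → ℝ) (C : ℝ) (hC : ∀ n, |S (n + 1) - S n| ≤ C)
    (hsq : Tendsto (fun k : ℕ => S (k ^ 2) / (k : ℝ) ^ 2) atTop (𝓝 0)) :
    Tendsto (fun n : ℕ => S n / n) atTop (𝓝 0) := by
  have hC0 : 0 ≤ C := (abs_nonneg _).trans (hC 0)
  have hinc : ∀ m j, |S (m + j) - S m| ≤ C * j := by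
    intro m j
    induction j with
    | zero => simp
    | succ j ih =>
      have := hC (m + j)
      calc |S (m + (j + 1)) - S m| = |(S (m + j + 1) - S (m + j)) + (S (m + j) - S m)| := by
            congr 1; rw [← add_assoc]; ring
        _ ≤ C + C * j := (abs_add_le _ _).trans (add_le_add this ih)
        _ = C * ((j + 1 : ℕ) : ℝ) := by push_cast; ring
  have hsqrt : Tendsto Nat.sqrt atTop atTop := by
    refine tendsto_atTop.2 fun b => ?_
    filter_upwards [eventually_ge_atTop (b * b)] with n hn
    exact Nat.le_sqrt.2 hn
  have h1 : Tendsto (fun n : ℕ => |S (n.sqrt ^ 2) / ((n.sqrt : ℕ) : ℝ) ^ 2| + 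
      C * 2 * ((n.sqrt : ℕ) : ℝ)⁻¹) atTop (𝓝 0) := by
    have a1 := (hsq.comp hsqrt).abs
    have a2 := ((tendsto_inv_atTop_nhds_zero_nat (𝕜 := ℝ)).comp hsqrt).const_mul (C * 2)
    simpa using a1.add a2
  refine squeeze_zero_norm' ?_ h1
  filter_upwards [eventually_ge_atTop 1] with n hn
  have hk : 1 ≤ n.sqrt := Nat.le_sqrt.2 (by simpa using hn)
  set k := n.sqrt with hkdef
  have hkn : k ^ 2 ≤ n := by rw [pow_two]; exact Nat.sqrt_le n
  obtain ⟨j, hj⟩ := Nat.exists_eq_add_of_le hkn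
  have hjk : j ≤ 2 * k := by
    have : n ≤ k * k + k + k := Nat.sqrt_le_add n
    nlinarith
  have hk0 : (0 : ℝ) < k := by exact_mod_cast hk
  have hknR : (k : ℝ) ^ 2 ≤ n := by exact_mod_cast hkn
  have hjR : (j : ℝ) ≤ 2 * k := by exact_mod_cast hjk
  have hi := hinc (k ^ 2) j
  rw [← hj] at hi
  rw [Real.norm_eq_abs, abs_div, abs_div, Nat.abs_cast, abs_of_pos (pow_pos hk0 2)]
  have h2 : |S n| ≤ |S (k ^ 2)| + C * (2 * k) := by
    have : |S n| ≤ |S n - S (k ^ 2)| + |S (k ^ 2)| := by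
      have := abs_add_le (S n - S (k ^ 2)) (S (k ^ 2)); simpa using this
    have := mul_le_mul_of_nonneg_left hjR hC0
    linarith
  calc |S n| / n ≤ (|S (k ^ 2)| + C * (2 * k)) / (k : ℝ) ^ 2 := by
        apply div_le_div₀ _ h2 (pow_pos hk0 2) hknR
        positivity
    _ = |S (k ^ 2)| / (k : ℝ) ^ 2 + C * 2 * (k : ℝ)⁻¹ := by
        field_simp

/-- Enumeration of the unit vectors. -/
def uvec {d : ℕ} (k : Fin d × Bool) : Fin d → ℤ :=
  if k.2 then Pi.single k.1 1 else -Pi.single k.1 1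

theorem uvec_isUnit {d : ℕ} (k : Fin d × Bool) : IsUnitVec (uvec k) := by
  refine ⟨k.1, ?_⟩
  unfold uvec
  split_ifs <;> simp

theorem exists_uvec {d : ℕ} {e : Fin d → ℤ} (h : IsUnitVec e) : ∃ k, uvec k = e := by
  obtain ⟨i, h | h⟩ := h
  · exact ⟨(i, true), by simp [uvec, h]⟩
  · exact ⟨(i, false), by simp [uvec, h]⟩

theorem uvec_bar {d : ℕ} (k : Fin d × Bool) : uvec (k.1, !k.2) = -uvec k := by
  obtain ⟨i, b⟩ := k
  cases b <;> simp [uvec]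

theorem uvec_injective {d : ℕ} : Function.Injective (uvec (d := d)) := by
  rintro ⟨i, b⟩ ⟨j, c⟩ h
  have h1 := congrFun h i
  by_cases hij : i = j
  · subst hij
    cases b <;> cases c <;> simp [uvec] at h1 ⊢
  · cases b <;> cases c <;> simp [uvec, hij] at h1

theorem tsum_uvec {d : ℕ} {α : Type*} [AddCommMonoid α] [TopologicalSpace α]
    (x : Fin d → ℤ) (f : (Fin d → ℤ) → α)
    (hf : ∀ y, ¬ IsUnitVec (y - x) → f y = 0) : ∑' y, f y = ∑ k, f (x + uvec k) := by
  have hinj : Function.Injective (fun k : Fin d × Bool => x + uvec k) :=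
    fun a b h => uvec_injective (add_left_cancel h)
  rw [← hinj.tsum_eq (f := f), tsum_fintype]
  intro y hy
  by_contra hne
  apply hy
  apply hf
  intro hu
  obtain ⟨k, hk⟩ := exists_uvec hu
  exact hne ⟨k, by simp [hk]⟩

section Walk

variable {d : ℕ} {p : (Fin d → ℤ) → (Fin d → ℤ) → ℝ} {μ : Measure (ℕ → (Fin d → ℤ))}

theorem aux_meas_eq (n : ℕ) (x : Fin d → ℤ) :
    MeasurableSet {ω : ℕ → (Fin d → ℤ) | ω n = x} := by
  have h : MeasurableSet ((fun ω : ℕ → (Fin d → ℤ) => ω n) ⁻¹' {x}) :=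
    (measurable_pi_apply n) (MeasurableSet.singleton x)
  have e : {ω : ℕ → (Fin d → ℤ) | ω n = x} = (fun ω : ℕ → (Fin d → ℤ) => ω n) ⁻¹' {x} := by
    ext ω; simp
  rw [e]; exact h

theorem aux_meas_tsum (n : ℕ) (A : Set (ℕ → (Fin d → ℤ))) (hA : MeasurableSet A) :
    μ A = ∑' c : Fin n → (Fin d → ℤ), μ (A ∩ {ω | ∀ i : Fin n, ω i = c i}) := by
  rw [← measure_iUnion]
  · congr 1
    ext ω
    simp only [Set.mem_iUnion, Set.mem_inter_iff, Set.mem_ofPred_eq]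
    exact ⟨fun h => ⟨fun i => ω i, h, fun _ => rfl⟩, fun ⟨_, h, _⟩ => h⟩
  · intro c c' hcc
    rw [Function.onFun, Set.disjoint_left]
    rintro ω ⟨_, h1⟩ ⟨_, h2⟩
    exact hcc (funext fun i => (h1 i).symm.trans (h2 i))
  · intro c
    refine hA.inter ?_
    rw [Set.ofPred_forall]
    exact MeasurableSet.iInter fun i =>
      aux_meas_eq (i : ℕ) (c i)

theorem aux_step (hp : ∀ x y, 0 ≤ p x y) (hμ : IsRWPELaw p 0 μ) (n : ℕ) (x y : Fin d → ℤ) :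
    μ {ω | ω n = x ∧ ω (n + 1) = y} = μ {ω | ω n = x} * ENNReal.ofReal (p x (y - x)) := by
  have hm : MeasurableSet {ω : ℕ → (Fin d → ℤ) | ω n = x ∧ ω (n + 1) = y} :=
    (aux_meas_eq n x).inter (aux_meas_eq (n + 1) y)
  rw [aux_meas_tsum n _ hm,
    aux_meas_tsum n _ (aux_meas_eq n x), ← ENNReal.tsum_mul_right]
  refine tsum_congr fun c => ?_
  let z : ℕ → (Fin d → ℤ) := fun i => if h : i < n then c ⟨i, h⟩ else if i = n then x else y
  have hz1 : ∀ i : Fin n, z i = c i := fun i => by simp [z]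
  have hz2 : z n = x := by simp [z]
  have hz3 : z (n + 1) = y := by simp [z]
  have e1 : ({ω | ω n = x ∧ ω (n + 1) = y} ∩ {ω | ∀ i : Fin n, ω i = c i}
      : Set (ℕ → (Fin d → ℤ))) = {ω | ∀ i ≤ n + 1, ω i = z i} := by
    ext ω
    simp only [Set.mem_inter_iff, Set.mem_ofPred_eq]
    constructor
    · rintro ⟨⟨h1, h2⟩, h3⟩ i hi
      rcases Nat.lt_or_ge i n with h | h
      · rw [h3 ⟨i, h⟩, ← hz1]
      · rcases (by omega : i = n ∨ i = n + 1) with h | h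
        · rw [h, h1, hz2]
        · rw [h, h2, hz3]
    · intro h
      refine ⟨⟨(h n (by omega)).trans hz2, (h (n + 1) le_rfl).trans hz3⟩, fun i => ?_⟩
      rw [h i (by omega), hz1]
  have e2 : ({ω | ω n = x} ∩ {ω | ∀ i : Fin n, ω i = c i}
      : Set (ℕ → (Fin d → ℤ))) = {ω | ∀ i ≤ n, ω i = z i} := by
    ext ω
    simp only [Set.mem_inter_iff, Set.mem_ofPred_eq]
    constructor
    · rintro ⟨h1, h3⟩ i hi
      rcases Nat.lt_or_ge i n with h | h
      · rw [h3 ⟨i, h⟩, ← hz1]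
      · rw [(by omega : i = n), h1, hz2]
    · intro h
      refine ⟨(h n le_rfl).trans hz2, fun i => ?_⟩
      rw [h i (by omega), hz1]
  rw [e1, e2, hμ.2, hμ.2, Finset.prod_range_succ, ← mul_assoc, ENNReal.ofReal_mul, hz2, hz3]
  refine mul_nonneg (by split_ifs <;> norm_num) (Finset.prod_nonneg fun i _ => hp _ _)

theorem aux_ae (hp : ∀ x y, 0 ≤ p x y) (hnn : IsNearestNeighbour p) (hμ : IsRWPELaw p 0 μ) :
    ∀ᵐ ω ∂μ, ω 0 = 0 ∧ ∀ n, ∃ k, ω (n + 1) = ω n + uvec k := by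
  have := hμ.1
  have h0 : ∀ᵐ ω ∂μ, ω 0 = 0 := by
    have h := hμ.2 0 (fun _ => 0)
    simp only [Nat.le_zero, forall_eq, if_true, Finset.range_zero, Finset.prod_empty, mul_one,
      ENNReal.ofReal_one] at h
    exact (prob_compl_eq_zero_iff (aux_meas_eq 0 0)).2 h
  have h1 : ∀ᵐ ω ∂μ, ∀ n, ∀ x y, ¬ IsUnitVec (y - x) → ¬ (ω n = x ∧ ω (n + 1) = y) := by
    rw [ae_all_iff]; intro n
    rw [ae_all_iff]; intro x
    rw [ae_all_iff]; intro y
    rw [ae_all_iff]; intro hxy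
    have hpz : p x (y - x) = 0 := by
      by_contra h; exact hxy (hnn _ _ h)
    rw [ae_iff]
    simp only [not_not]
    rw [aux_step hp hμ, hpz]; simp
  filter_upwards [h0, h1] with ω hω0 hω1
  refine ⟨hω0, fun n => ?_⟩
  by_contra h
  refine hω1 n (ω n) (ω (n + 1)) (fun hu => ?_) ⟨rfl, rfl⟩
  obtain ⟨k, hk⟩ := exists_uvec hu
  exact h ⟨k, by rw [hk]; abel⟩

theorem aux_lint (hp : ∀ x y, 0 ≤ p x y) (hnn : IsNearestNeighbour p) (hμ : IsRWPELaw p 0 μ)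
    (n : ℕ) (F : (Fin d → ℤ) → ENNReal) :
    ∫⁻ ω, F (ω (n + 1)) ∂μ =
      ∫⁻ ω, ∑ k, ENNReal.ofReal (p (ω n) (uvec k)) * F (ω n + uvec k) ∂μ := by
  have hm1 : Measurable (fun ω : ℕ → (Fin d → ℤ) => ω n) := measurable_pi_apply n
  have hm2 : Measurable (fun ω : ℕ → (Fin d → ℤ) => (ω n, ω (n + 1))) :=
    hm1.prodMk (measurable_pi_apply (n + 1))
  have hmc : ∀ G : (Fin d → ℤ) → ENNReal, Measurable G := fun G => measurable_of_countable G
  have hmc2 : ∀ G : (Fin d → ℤ) × (Fin d → ℤ) → ENNReal, Measurable G :=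
    fun G => measurable_of_countable G
  have e1 : ∫⁻ ω, F (ω (n + 1)) ∂μ =
      ∫⁻ z, F z.2 ∂(μ.map (fun ω => (ω n, ω (n + 1)))) := by
    rw [lintegral_map (hmc2 fun z => F z.2) hm2]
  have e2 : ∫⁻ ω, ∑ k, ENNReal.ofReal (p (ω n) (uvec k)) * F (ω n + uvec k) ∂μ =
      ∫⁻ x, ∑ k, ENNReal.ofReal (p x (uvec k)) * F (x + uvec k) ∂(μ.map (fun ω => ω n)) := by
    rw [lintegral_map (hmc fun x => ∑ k, ENNReal.ofReal (p x (uvec k)) * F (x + uvec k)) hm1]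
  rw [e1, e2, lintegral_countable', lintegral_countable', ENNReal.tsum_prod']
  refine tsum_congr fun x => ?_
  rw [Measure.map_apply hm1 (MeasurableSet.singleton x)]
  have e3 : ∀ y, μ.map (fun ω => (ω n, ω (n + 1))) {(x, y)} =
      μ ((fun ω => ω n) ⁻¹' {x}) * ENNReal.ofReal (p x (y - x)) := fun y => by
    rw [Measure.map_apply hm2 (MeasurableSet.singleton (x, y))]
    have := aux_step hp hμ n x y
    have e4 : (fun ω : ℕ → (Fin d → ℤ) => (ω n, ω (n + 1))) ⁻¹' {(x, y)} =
        {ω | ω n = x ∧ ω (n + 1) = y} := by ext ω; simp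
    have e5 : (fun ω : ℕ → (Fin d → ℤ) => ω n) ⁻¹' {x} = {ω | ω n = x} := by ext ω; simp
    rw [e4, e5, this]
  simp only [e3]
  rw [tsum_uvec x, Finset.sum_mul]
  · refine Finset.sum_congr rfl fun k _ => ?_
    rw [add_sub_cancel_left]; ring
  · intro y hy
    have hpz : p x (y - x) = 0 := by
      by_contra h; exact hy (hnn _ _ h)
    simp [hpz]

theorem aux_lln (hp : ∀ x y, 0 ≤ p x y) (hp1 : ∀ x, ∑ k, p x (uvec k) = 1)
    (hnn : IsNearestNeighbour p) (hμ : IsRWPELaw p 0 μ)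
    (S : ℕ → (Fin d → ℤ) → ℝ) (hS0 : S 0 0 = 0) (C : ℝ)
    (hC : ∀ n x k, |S (n + 1) (x + uvec k) - S n x| ≤ C)
    (hmart : ∀ n x, ∑ k, p x (uvec k) * (S (n + 1) (x + uvec k) - S n x) = 0) :
    ∀ᵐ ω ∂μ, Tendsto (fun n : ℕ => S n (ω n) / n) atTop (𝓝 0) := by
  have := hμ.1
  have hstep : ∀ n, ∫⁻ ω, ENNReal.ofReal (S (n + 1) (ω (n + 1)) ^ 2) ∂μ ≤
      ∫⁻ ω, ENNReal.ofReal (S n (ω n) ^ 2) ∂μ + ENNReal.ofReal (C ^ 2) := by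
    intro n
    rw [aux_lint hp hnn hμ n (fun x => ENNReal.ofReal (S (n + 1) x ^ 2))]
    have hpt : ∀ x, ∑ k, ENNReal.ofReal (p x (uvec k)) *
        ENNReal.ofReal (S (n + 1) (x + uvec k) ^ 2) ≤
        ENNReal.ofReal (S n x ^ 2) + ENNReal.ofReal (C ^ 2) := by
      intro x
      rw [← ENNReal.ofReal_add (sq_nonneg _) (sq_nonneg _)]
      simp only [← ENNReal.ofReal_mul (hp _ _)]
      rw [← ENNReal.ofReal_sum_of_nonneg fun k _ => mul_nonneg (hp _ _) (sq_nonneg _)]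
      apply ENNReal.ofReal_le_ofReal
      have e : ∀ k, p x (uvec k) * S (n + 1) (x + uvec k) ^ 2 ≤ p x (uvec k) * S n x ^ 2 +
          2 * S n x * (p x (uvec k) * (S (n + 1) (x + uvec k) - S n x)) +
          p x (uvec k) * C ^ 2 := fun k => by
        have h1 : (S (n + 1) (x + uvec k) - S n x) ^ 2 ≤ C ^ 2 :=
          sq_le_sq' (abs_le.1 (hC n x k)).1 (abs_le.1 (hC n x k)).2
        have h2 := mul_le_mul_of_nonneg_left h1 (hp x (uvec k))
        nlinarith
      refine (Finset.sum_le_sum fun k _ => e k).trans ?_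
      rw [Finset.sum_add_distrib, Finset.sum_add_distrib, ← Finset.mul_sum, hmart,
        ← Finset.sum_mul, ← Finset.sum_mul, hp1]
      simp
    calc _ ≤ ∫⁻ ω, (ENNReal.ofReal (S n (ω n) ^ 2) + ENNReal.ofReal (C ^ 2)) ∂μ :=
          lintegral_mono fun ω => hpt (ω n)
      _ = _ := by
          rw [lintegral_add_right _ measurable_const]
          simp
  have hae := aux_ae hp hnn hμ
  have hbd : ∀ n : ℕ, ∫⁻ ω, ENNReal.ofReal (S n (ω n) ^ 2) ∂μ ≤ n * ENNReal.ofReal (C ^ 2) := by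
    intro n
    induction n with
    | zero =>
      have : ∫⁻ ω, ENNReal.ofReal (S 0 (ω 0) ^ 2) ∂μ = ∫⁻ ω, 0 ∂μ :=
        lintegral_congr_ae (by filter_upwards [hae] with ω hω; simp [hω.1, hS0])
      rw [this]; simp
    | succ n ih =>
      refine (hstep n).trans ?_
      push_cast
      rw [add_mul, one_mul]
      gcongr
  have hmeas : ∀ n, Measurable (fun ω : ℕ → (Fin d → ℤ) => S n (ω n)) := fun n =>
    (measurable_of_countable (S n)).comp (measurable_pi_apply n)
  have hterm : ∀ k : ℕ, ∫⁻ ω, ENNReal.ofReal ((S (k ^ 2) (ω (k ^ 2)) / (k : ℝ) ^ 2) ^ 2) ∂μ ≤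
      ENNReal.ofReal (C ^ 2 * (1 / (k : ℝ) ^ 2)) := by
    intro k
    rcases Nat.eq_zero_or_pos k with hk | hk
    · subst hk; simp
    have hk0 : (0 : ℝ) < k := by exact_mod_cast hk
    have : ∀ ω : ℕ → (Fin d → ℤ), ENNReal.ofReal ((S (k ^ 2) (ω (k ^ 2)) / (k : ℝ) ^ 2) ^ 2) =
        ENNReal.ofReal (1 / (k : ℝ) ^ 4) * ENNReal.ofReal (S (k ^ 2) (ω (k ^ 2)) ^ 2) := fun ω => by
      rw [← ENNReal.ofReal_mul (by positivity)]
      congr 1; field_simp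
    simp only [this]
    rw [lintegral_const_mul _ (by exact ((hmeas _).pow_const 2).ennreal_ofReal)]
    refine (mul_le_mul_right (hbd (k ^ 2)) _).trans (le_of_eq ?_)
    rw [← ENNReal.ofReal_natCast, ← ENNReal.ofReal_mul (by positivity),
      ← ENNReal.ofReal_mul (by positivity)]
    congr 1; push_cast; field_simp
  have hsum : ∫⁻ ω, ∑' k : ℕ, ENNReal.ofReal ((S (k ^ 2) (ω (k ^ 2)) / (k : ℝ) ^ 2) ^ 2) ∂μ ≠ ⊤ := by
    rw [lintegral_tsum fun k =>
      (((hmeas (k ^ 2)).div_const _).pow_const 2).ennreal_ofReal.aemeasurable]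
    refine ne_top_of_le_ne_top ?_ (ENNReal.tsum_le_tsum hterm)
    exact ((Real.summable_one_div_nat_pow.2 (by norm_num)).mul_left _).tsum_ofReal_ne_top
  have hfin := ae_lt_top (Measurable.tsum fun k =>
      (((hmeas (k ^ 2)).div_const ((k : ℝ) ^ 2)).pow_const 2).ennreal_ofReal) hsum
  filter_upwards [hae, hfin] with ω hω hω2
  apply aux_interp (fun n => S n (ω n)) C
  · intro n
    obtain ⟨k, hk⟩ := hω.2 n
    rw [hk]; exact hC n (ω n) k
  · have h1 := ENNReal.tendsto_atTop_zero_of_tsum_ne_top hω2.ne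
    have h2 := (ENNReal.tendsto_toReal ENNReal.zero_ne_top).comp h1
    have h3 : Tendsto (fun k : ℕ => (S (k ^ 2) (ω (k ^ 2)) / (k : ℝ) ^ 2) ^ 2) atTop (𝓝 0) := by
      refine h2.congr fun k => ?_
      simp only [Function.comp]
      rw [ENNReal.toReal_ofReal (sq_nonneg _)]
    have h4 := h3.sqrt
    simp only [Real.sqrt_sq_eq_abs, Real.sqrt_zero] at h4
    exact (tendsto_zero_iff_abs_tendsto_zero _).2 h4

end Walk

section TorusFacts

variable {d : ℕ} (Md : Fin d → ℕ)

theorem projT_add (x y : Fin d → ℤ) : projT Md (x + y) = projT Md x + projT Md y := by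
  ext i; simp [projT]

theorem projT_repT [∀ i, NeZero (Md i)] (a : Torus d Md) : projT Md (repT Md a) = a := by
  ext i; simp [projT, repT]

theorem periodic_sum {α : Type*} (c : Fin d → ℤ) (f : (Fin d → ℤ) → α)
    (hf : ∀ x i, f (x + Pi.single i (c i)) = f x) (x n : Fin d → ℤ) :
    f (x + fun i => n i * c i) = f x := by
  have h1 : ∀ i, Function.Periodic f (n i • Pi.single i (c i)) := fun i =>
    Function.Periodic.zsmul (fun x => hf x i) (n i)
  have h2 : ∀ s : Finset (Fin d), Function.Periodic f (∑ i ∈ s, n i • Pi.single i (c i)) := by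
    intro s
    classical
    induction s using Finset.induction_on with
    | empty => intro x; simp
    | insert a s ha ih => rw [Finset.sum_insert ha]; exact (h1 a).add_period ih
  have h3 := h2 Finset.univ x
  have h4 : (fun i => n i * c i) = ∑ i, n i • (Pi.single i (c i) : Fin d → ℤ) := by
    ext j
    simp [Finset.sum_apply, Pi.single_apply]
  rw [h4]; exact h3

theorem periodic_proj {α : Type*} (f : (Fin d → ℤ) → α)
    (hf : ∀ x i, f (x + Pi.single i (Md i : ℤ)) = f x) (x y : Fin d → ℤ)
    (h : projT Md x = projT Md y) : f x = f y := by
  have h1 : ∀ i, ∃ n : ℤ, y i - x i = n * Md i := fun i => by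
    have := congrFun h i
    simp only [projT] at this
    rw [ZMod.intCast_eq_intCast_iff_dvd_sub] at this
    obtain ⟨n, hn⟩ := this
    exact ⟨n, by rw [hn, mul_comm]⟩
  choose n hn using h1
  have h2 := periodic_sum (fun i => (Md i : ℤ)) f hf x n
  rw [← h2]
  congr 1
  ext i
  have := hn i
  simp only [Pi.add_apply]
  omega

theorem const_of_unit {α : Type*} (f : (Fin d → ℤ) → α)
    (hf : ∀ x e, IsUnitVec e → f (x + e) = f x) (x : Fin d → ℤ) : f x = f 0 := by
  have h := periodic_sum (fun _ => 1) f (fun x i => hf x _ ⟨i, Or.inl rfl⟩) 0 x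
  simpa using h

theorem torus_conn [∀ i, NeZero (Md i)] (s : Set (Torus d Md)) (hs : s.Nonempty)
    (hcl : ∀ a ∈ s, ∀ k : Fin d × Bool, a + projT Md (uvec k) ∈ s) : s = Set.univ := by
  obtain ⟨a, ha⟩ := hs
  let N : AddSubmonoid (Torus d Md) :=
    { carrier := {c | ∀ x ∈ s, x + c ∈ s}
      zero_mem' := fun x hx => by simpa using hx
      add_mem' := fun {c c'} hc hc' x hx => by
        rw [← add_assoc]; exact hc' _ (hc x hx) }
  have hN : ∀ i, projT Md (Pi.single i 1) ∈ N := fun i x hx => by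
    have := hcl x hx (i, true)
    simpa [uvec] using this
  rw [Set.eq_univ_iff_forall]
  intro b
  have hb : b - a = ∑ i, ((b - a) i).val • projT Md (Pi.single i 1) := by
    ext j
    rw [Finset.sum_apply, Finset.sum_eq_single j]
    · rw [Pi.smul_apply, nsmul_eq_mul]
      simp only [projT, Pi.single_eq_same, Int.cast_one, mul_one]
      exact (ZMod.natCast_zmod_val ((b - a) j)).symm
    · intro i _ hij
      rw [Pi.smul_apply]
      simp [projT, Pi.single_eq_of_ne hij.symm]
    · simp
  have hmem : b - a ∈ N := by
    rw [hb]
    exact N.sum_mem fun i _ => N.nsmul_mem (hN i) _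
  have := hmem a ha
  simpa using this

end TorusFacts

/-- **Asymptotic decrease of the potential along the walk.** For a reversible
nearest-neighbour RWPE with all one-step probabilities positive, potential `u`,
average negative gradient `g`, aperiodic induced chain (irreducibility is automatic)
with stationary distribution `π` and drift `ν`: `u(Xₙ)/n → -⟨g, ν⟩` almost surely;
in particular, if `g ≠ 0` then `u(Xₙ) → -∞` almost surely. -/
theorem potential_along_walk (d : ℕ) (hd : 0 < d) (Md : Fin d → ℕ)
    [∀ i, NeZero (Md i)]
    (p : (Fin d → ℤ) → (Fin d → ℤ) → ℝ) (henv : IsPeriodicEnv Md p)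
    (hnn : IsNearestNeighbour p) (hpos : ∀ x e, IsUnitVec e → 0 < p x e)
    (u : (Fin d → ℤ) → ℝ) (hu0 : u 0 = 0)
    (hu : ∀ x e, IsUnitVec e → u x - u (x + e) = Real.log (p x e / p (x + e) (-e)))
    (haper : MatAperiodic (indMatrix Md p))
    (π : Torus d Md → ℝ) (hπ : IsStationaryDist (indMatrix Md p) π)
    (μ : Measure (ℕ → (Fin d → ℤ))) (hμ : IsRWPELaw p 0 μ) :
    (∀ᵐ ω ∂μ, Tendsto (fun n : ℕ => u (ω n) / n) atTop
        (𝓝 (-∑ i, avgNegGrad Md p i * driftVec Md p π i))) ∧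
    (avgNegGrad Md p ≠ 0 →
      ∀ᵐ ω ∂μ, Tendsto (fun n : ℕ => u (ω n)) atTop atBot) := by
  obtain ⟨hp, hpsum, hpper⟩ := henv
  have hp1 : ∀ x, ∑ k, p x (uvec k) = 1 := fun x => by
    have h := tsum_uvec (0 : Fin d → ℤ) (p x) (fun y hy => by
      by_contra hne
      exact hy (by simpa using hnn x y hne))
    rw [(hpsum x).tsum_eq] at h
    simpa using h.symm
  -- the induced chain
  let q : Torus d Md → Fin d × Bool → ℝ := fun a k => p (repT Md a) (uvec k)
  let τ : Torus d Md → Fin d × Bool → Torus d Md := fun a k => a + projT Md (uvec k)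
  let bar : Fin d × Bool → Fin d × Bool := fun k => (k.1, !k.2)
  have hper : ∀ x y, projT Md x = projT Md y → p x = p y := fun x y h =>
    periodic_proj Md p (fun x i => funext fun y => hpper x y i) x y h
  have hpq : ∀ x k, p x (uvec k) = q (projT Md x) k := fun x k =>
    congrFun (hper x _ (projT_repT Md _).symm) _
  have hq : ∀ a k, 0 < q a k := fun a k => hpos _ _ (uvec_isUnit k)
  have hq1 : ∀ a, ∑ k, q a k = 1 := fun a => hp1 _
  have hconn : ∀ s : Set (Torus d Md), s.Nonempty → (∀ a ∈ s, ∀ k, τ a k ∈ s) → s = Set.univ :=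
    fun s => torus_conn Md s
  have hτproj : ∀ x k, projT Md (x + uvec k) = τ (projT Md x) k := fun x k => projT_add Md _ _
  have hprojneg : ∀ x, projT Md (-x) = -projT Md x := fun x => by ext i; simp [projT]
  have hτ : ∀ a k, τ (τ a k) (bar k) = a := fun a k => by
    simp only [τ, bar, uvec_bar, hprojneg, add_neg_cancel_right]
  have hP : ∀ a b, indMatrix Md p a b = ∑ k, if τ a k = b then q a k else 0 := fun a b => by
    have h := tsum_uvec (0 : Fin d → ℤ)
      (fun z => if a + projT Md z = b then p (repT Md a) z else 0) (fun y hy => by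
        have : p (repT Md a) y = 0 := by
          by_contra hne
          exact hy (by simpa using hnn _ y hne)
        simp [this])
    simp only [zero_add] at h
    exact h
  obtain ⟨hπ0, hπ1, hπs⟩ := hπ
  have hst : ∀ f : Torus d Md → ℝ,
      ∑ a, π a * ∑ k, q a k * f (τ a k) = ∑ a, π a * f a := by
    intro f
    calc ∑ a, π a * ∑ k, q a k * f (τ a k)
        = ∑ a, ∑ b, π a * indMatrix Md p a b * f b := by
          refine Finset.sum_congr rfl fun a _ => ?_
          simp only [hP, mul_assoc, ← Finset.mul_sum]
          congr 1
          simp only [Finset.sum_mul]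
          rw [Finset.sum_comm]
          refine Finset.sum_congr rfl fun k _ => ?_
          simp
      _ = ∑ b, ∑ a, π a * indMatrix Md p a b * f b := Finset.sum_comm
      _ = ∑ a, π a * f a := by
          refine Finset.sum_congr rfl fun b _ => ?_
          rw [← Finset.sum_mul, hπs]
  have hπpos := aux_pi_pos q τ hq hconn π hπ0 hπ1 hst
  -- the increments of the potential
  let ℓ : Torus d Md → Fin d × Bool → ℝ := fun a k => Real.log (q a k / q (τ a k) (bar k))
  have hinc : ∀ x k, u x - u (x + uvec k) = ℓ (projT Md x) k := fun x k => by
    rw [hu x _ (uvec_isUnit k), ← uvec_bar, hpq, hpq, hτproj]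
  let g := avgNegGrad Md p
  have hMi : ∀ i, u (Pi.single i (Md i : ℤ)) = -(Md i * g i) := fun i => by
    have htel : ∀ n : ℕ, ∑ j ∈ Finset.range n, Real.log (p (Pi.single i (j : ℤ)) (Pi.single i 1) /
        p (Pi.single i ((j : ℤ) + 1)) (-Pi.single i 1)) = - u (Pi.single i (n : ℤ)) := by
      intro n
      induction n with
      | zero => simp [hu0]
      | succ n ih =>
        rw [Finset.sum_range_succ, ih]
        have h := hu (Pi.single i (n : ℤ)) (Pi.single i 1) ⟨i, Or.inl rfl⟩
        rw [← Pi.single_add] at h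
        rw [← h]
        push_cast
        ring
    have hM0 : (Md i : ℝ) ≠ 0 := by exact_mod_cast NeZero.ne (Md i)
    simp only [g, avgNegGrad]
    rw [htel, mul_inv_cancel_left₀ hM0, neg_neg]
  have hshift : ∀ x i, u (x + Pi.single i (Md i : ℤ)) = u x - Md i * g i := fun x i => by
    have h := const_of_unit (fun x => u (x + Pi.single i (Md i : ℤ)) - u x) (fun x e he => by
      obtain ⟨k, rfl⟩ := exists_uvec he
      have h1 := hinc x k
      have h2 := hinc (x + Pi.single i (Md i : ℤ)) k
      have h3 : projT Md (x + Pi.single i (Md i : ℤ)) = projT Md x := by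
        ext j
        simp only [projT, Pi.add_apply, Pi.single_apply]
        split_ifs with hj
        · subst hj; simp
        · simp
      rw [h3] at h2
      rw [add_right_comm] at h2
      show u (x + uvec k + Pi.single i (Md i : ℤ)) - u (x + uvec k) =
        u (x + Pi.single i (Md i : ℤ)) - u x
      linarith) x
    simp only [zero_add, hu0, hMi] at h
    linarith
  let w : (Fin d → ℤ) → ℝ := fun x => u x + ∑ i, g i * x i
  have hwper : ∀ x y, projT Md x = projT Md y → w x = w y := fun x y h =>
    periodic_proj Md w (fun x i => by
      simp only [w, hshift, Pi.add_apply, Int.cast_add, mul_add, Finset.sum_add_distrib]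
      have : ∑ j, g j * (((Pi.single i (Md i : ℤ) : Fin d → ℤ) j : ℤ) : ℝ) = g i * Md i := by
        rw [Finset.sum_eq_single i]
        · simp
        · intro j _ hj; simp [hj]
        · simp
      rw [this]; ring) x y h
  let h : Torus d Md → ℝ := fun a => ∑ k, q a k * ℓ a k
  let c : ℝ := ∑ a, π a * h a
  have hc : c = ∑ i, avgNegGrad Md p i * driftVec Md p π i := by
    have hl : ∀ a k, ℓ a k = (w (repT Md a) - w (repT Md (τ a k))) +
        ∑ i, g i * (uvec k i : ℝ) := fun a k => by
      have h1 := hinc (repT Md a) k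
      rw [projT_repT] at h1
      rw [← h1, hwper (repT Md (τ a k)) (repT Md a + uvec k)
        (by rw [projT_repT, hτproj, projT_repT])]
      simp only [w, Pi.add_apply, Int.cast_add, mul_add, Finset.sum_add_distrib]
      ring
    have hdr : ∀ i, driftVec Md p π i = ∑ a, π a * ∑ k, q a k * (uvec k i : ℝ) := fun i => by
      unfold driftVec
      refine Finset.sum_congr rfl fun a _ => ?_
      congr 1
      have h := tsum_uvec (0 : Fin d → ℤ) (fun y => p (repT Md a) y * (y i : ℝ)) (fun y hy => by
        have : p (repT Md a) y = 0 := by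
          by_contra hne
          exact hy (by simpa using hnn _ y hne)
        simp [this])
      simp only [zero_add] at h
      exact h
    have h0 := hst (fun a => w (repT Md a))
    simp only [c, h, hl, mul_add, mul_sub, Finset.sum_add_distrib, Finset.sum_sub_distrib,
      h0, ← Finset.sum_mul, hq1, one_mul, sub_self, zero_add, hdr]
    simp only [Finset.mul_sum]
    calc _ = ∑ a, ∑ i, ∑ k, π a * (q a k * (g i * (uvec k i : ℝ))) :=
          Finset.sum_congr rfl fun a _ => Finset.sum_comm
      _ = ∑ i, ∑ a, ∑ k, π a * (q a k * (g i * (uvec k i : ℝ))) := Finset.sum_comm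
      _ = _ := Finset.sum_congr rfl fun i _ => Finset.sum_congr rfl fun a _ =>
          Finset.sum_congr rfl fun k _ => by simp only [g]; ring
  obtain ⟨φ, hφ⟩ := aux_poisson q τ hq hq1 hconn π hπ1 hst h
  -- the martingale
  let S : ℕ → (Fin d → ℤ) → ℝ := fun n x => u x - φ (projT Md x) + φ (projT Md 0) + n * c
  let D : Torus d Md → Fin d × Bool → ℝ := fun a k => -ℓ a k - φ (τ a k) + φ a + c
  have hSD : ∀ n x k, S (n + 1) (x + uvec k) - S n x = D (projT Md x) k := fun n x k => by
    have h1 := hinc x k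
    simp only [S, D, hτproj]
    push_cast
    rw [← h1]
    ring
  obtain ⟨C, hC⟩ : ∃ C, ∀ z : Torus d Md × (Fin d × Bool), |D z.1 z.2| ≤ C := by
    obtain ⟨C, hC⟩ := (Set.finite_range
      (fun z : Torus d Md × (Fin d × Bool) => |D z.1 z.2|)).bddAbove
    exact ⟨C, fun z => hC ⟨z, rfl⟩⟩
  have hlln := aux_lln hp hp1 hnn hμ S (by simp [S, hu0]) C
    (fun n x k => by rw [hSD]; exact hC (projT Md x, k))
    (fun n x => by
      simp only [hSD, hpq]
      have h1 := hφ (projT Md x)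
      generalize projT Md x = a at h1 ⊢
      have h2 : h a = ∑ k, q a k * ℓ a k := rfl
      have h3 : c = ∑ b, π b * h b := rfl
      simp only [D, mul_add, mul_sub, mul_neg, Finset.sum_add_distrib, Finset.sum_sub_distrib,
        Finset.sum_neg_distrib, ← Finset.sum_mul, hq1, one_mul]
      rw [← h2]
      rw [← h3] at h1
      linarith)
  obtain ⟨B, hB⟩ : ∃ B, ∀ a : Torus d Md, |φ a - φ (projT Md 0)| ≤ B := by
    obtain ⟨C, hC⟩ := (Set.finite_range
      (fun a : Torus d Md => |φ a - φ (projT Md 0)|)).bddAbove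
    exact ⟨C, fun z => hC ⟨z, rfl⟩⟩
  have hmain : ∀ᵐ ω ∂μ, Tendsto (fun n : ℕ => u (ω n) / n) atTop (𝓝 (-c)) := by
    filter_upwards [hlln] with ω hω
    have hb : Tendsto (fun n : ℕ => (φ (projT Md (ω n)) - φ (projT Md 0)) / (n : ℝ)) atTop
        (𝓝 0) := by
      refine squeeze_zero_norm (a := fun n : ℕ => B / (n : ℝ)) (fun n => ?_)
        (tendsto_const_div_atTop_nhds_zero_nat B)
      rw [norm_div, Real.norm_eq_abs, Real.norm_natCast]
      exact div_le_div_of_nonneg_right (hB _) (Nat.cast_nonneg n)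
    have h3 := (hω.add hb).sub_const c
    rw [add_zero, zero_sub] at h3
    refine h3.congr' ?_
    filter_upwards [eventually_gt_atTop 0] with n hn
    have hn0 : (n : ℝ) ≠ 0 := by exact_mod_cast hn.ne'
    simp only [S]
    field_simp
    ring
  refine ⟨by rw [← hc]; exact hmain, fun hg => ?_⟩
  have hcpos : 0 < c := by
    by_contra hle
    apply hg
    have hent := aux_entropy q τ hq bar (fun k => by simp [bar]) hτ π hπpos hst hq1 (not_lt.1 hle)
    have hconst := const_of_unit (fun x => u x + Real.log (π (projT Md x))) (fun x e he => by
      obtain ⟨k, rfl⟩ := exists_uvec he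
      have h1 := hinc x k
      have h2 : ℓ (projT Md x) k = _ := hent (projT Md x) k
      show u (x + uvec k) + _ = u x + _
      rw [hτproj]
      linarith)
    ext i
    have h1 := hconst (Pi.single i (Md i : ℤ))
    have h3 : projT Md (Pi.single i (Md i : ℤ)) = projT Md 0 := by
      ext j
      simp only [projT, Pi.single_apply]
      split_ifs with hj
      · subst hj; simp
      · simp
    simp only [h3, hMi, hu0] at h1
    have hM0 : (Md i : ℝ) ≠ 0 := by exact_mod_cast NeZero.ne (Md i)
    have h4 : (Md i : ℝ) * g i = 0 := by linarith
    exact (mul_eq_zero.1 h4).resolve_left hM0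
  filter_upwards [hmain] with ω hω
  have h1 := hω.neg_mul_atTop (neg_lt_zero.2 hcpos) (tendsto_natCast_atTop_atTop (R := ℝ))
  refine h1.congr' ?_
  filter_upwards [eventually_gt_atTop 0] with n hn
  have hn0 : (n : ℝ) ≠ 0 := by exact_mod_cast hn.ne'
  field_simp
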